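/- Suppose the Fractional assumptions hold for φ, ψ ∈ Φ_w(ℝⁿ). Then there exist strong Φ-functions φ̃, ψ̃ ∈ Φ_s(ℝⁿ) such that φ ∼ φ̃, ψ ∼ ψ̃, φ̃⁻¹(x,t) ≈ t^{α/n}·ψ̃⁻¹(x,t), and there is a constant C with ψ̃⁻¹(x,t) ≤ C·ψ̃⁻¹(y,t) for every cube Q ⊂ ℝⁿ (of arbitrary size), almost every x, y ∈ Q and every t ∈ [0, 1/|Q|]. -/

import Mathlib

open MeasureTheory NNReal ENNReal Filter Set

noncomputable section

/-- `ℝⁿ` with the Euclidean structure. -/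
abbrev RSp (n : ℕ) := EuclideanSpace ℝ (Fin n)

variable {n : ℕ}

/-- A cube in `ℝⁿ` with sides parallel to the coordinate axes,
with center `c` and side length `2r`. -/
structure Cube (n : ℕ) where
  c : RSp n
  r : ℝ
  r_pos : 0 < r

/-- The underlying set of a cube. -/
def Cube.set (Q : Cube n) : Set (RSp n) := {y | ∀ i, |y i - Q.c i| ≤ Q.r}

/-- A weak Φ-function on `Ω` (the class `Φ_w(Ω)`). -/
structure IsWeakPhi (Ω : Set (RSp n)) (φ : RSp n → ℝ≥0 → ℝ≥0∞) : Prop where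
  meas : ∀ f : RSp n → ℝ≥0, Measurable f →
    AEMeasurable (fun x => φ x (f x)) (volume.restrict Ω)
  mono : ∀ x ∈ Ω, Monotone (φ x)
  zero : ∀ x ∈ Ω, φ x 0 = 0
  lim_zero : ∀ x ∈ Ω, Tendsto (fun t : ℝ≥0 => φ x t) (nhdsWithin 0 (Set.Ioi 0)) (nhds 0)
  lim_top : ∀ x ∈ Ω, Tendsto (fun t : ℝ≥0 => φ x t) atTop (nhds ∞)
  almost_inc : ∃ L : ℝ≥0, 1 ≤ L ∧ ∀ x ∈ Ω, ∀ s t : ℝ≥0, 0 < s → s < t →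
    φ x s / (s : ℝ≥0∞) ≤ (L : ℝ≥0∞) * (φ x t / (t : ℝ≥0∞))

/-- A convex Φ-function on `Ω` (the class `Φ_c(Ω)`): a weak Φ-function which is
additionally convex and left-continuous in `t` for a.e. `x ∈ Ω`. -/
structure IsConvexPhi (Ω : Set (RSp n)) (φ : RSp n → ℝ≥0 → ℝ≥0∞)
    extends IsWeakPhi Ω φ : Prop where
  convex : ∀ᵐ x ∂(volume.restrict Ω), ∀ s t a b : ℝ≥0, a + b = 1 →
    φ x (a * s + b * t) ≤ (a : ℝ≥0∞) * φ x s + (b : ℝ≥0∞) * φ x t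
  left_cont : ∀ᵐ x ∂(volume.restrict Ω), ∀ t : ℝ≥0,
    Tendsto (φ x) (nhdsWithin t (Set.Iio t)) (nhds (φ x t))

/-- A strong Φ-function on `Ω` (the class `Φ_s(Ω)`): a weak Φ-function which is
additionally convex and continuous into `[0,∞]` for a.e. `x ∈ Ω`. -/
structure IsStrongPhi (Ω : Set (RSp n)) (φ : RSp n → ℝ≥0 → ℝ≥0∞)
    extends IsWeakPhi Ω φ : Prop where
  convex : ∀ᵐ x ∂(volume.restrict Ω), ∀ s t a b : ℝ≥0, a + b = 1 →
    φ x (a * s + b * t) ≤ (a : ℝ≥0∞) * φ x s + (b : ℝ≥0∞) * φ x t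
  cont : ∀ᵐ x ∂(volume.restrict Ω), Continuous (φ x)

/-- The generalized (left-)inverse `φ⁻¹(x,t) = inf {τ ≥ 0 : φ(x,τ) ≥ t}`. -/
def phiInv (φ : RSp n → ℝ≥0 → ℝ≥0∞) (x : RSp n) (t : ℝ≥0∞) : ℝ≥0∞ :=
  sInf ((fun s : ℝ≥0 => (s : ℝ≥0∞)) '' {s : ℝ≥0 | t ≤ φ x s})

/-- The condition `(aInc)_p` on `Ω`: `t ↦ φ(x,t)/t^p` is almost increasing, uniformly in `x`. -/
def AInc (p : ℝ) (Ω : Set (RSp n)) (φ : RSp n → ℝ≥0 → ℝ≥0∞) : Prop :=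
  ∃ L : ℝ≥0, 1 ≤ L ∧ ∀ x ∈ Ω, ∀ s t : ℝ≥0, 0 < s → s < t →
    φ x s / (s : ℝ≥0∞) ^ p ≤ (L : ℝ≥0∞) * (φ x t / (t : ℝ≥0∞) ^ p)

/-- The condition `(aDec)_q` on `Ω`: `t ↦ φ(x,t)/t^q` is almost decreasing, uniformly in `x`. -/
def ADec (q : ℝ) (Ω : Set (RSp n)) (φ : RSp n → ℝ≥0 → ℝ≥0∞) : Prop :=
  ∃ L : ℝ≥0, 1 ≤ L ∧ ∀ x ∈ Ω, ∀ s t : ℝ≥0, 0 < s → s < t →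
    φ x t / (t : ℝ≥0∞) ^ q ≤ (L : ℝ≥0∞) * (φ x s / (s : ℝ≥0∞) ^ q)

/-- The condition `(A0)` on `Ω`: `β ≤ φ⁻¹(x,1) ≤ 1/β` for a.e. `x ∈ Ω`. -/
def A0 (Ω : Set (RSp n)) (φ : RSp n → ℝ≥0 → ℝ≥0∞) : Prop :=
  ∃ β : ℝ≥0, 0 < β ∧ β ≤ 1 ∧ ∀ᵐ x ∂(volume.restrict Ω),
    (β : ℝ≥0∞) ≤ phiInv φ x 1 ∧ phiInv φ x 1 ≤ (β : ℝ≥0∞)⁻¹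

/-- The condition `(A1)` (on all of `ℝⁿ`). -/
def A1 (φ : RSp n → ℝ≥0 → ℝ≥0∞) : Prop :=
  ∃ β : ℝ≥0, 0 < β ∧ β < 1 ∧ ∀ Q : Cube n, volume Q.set ≤ 1 →
    ∀ᵐ x ∂(volume.restrict Q.set), ∀ᵐ y ∂(volume.restrict Q.set),
      ∀ t : ℝ≥0∞, 1 ≤ t → t ≤ (volume Q.set)⁻¹ →
        (β : ℝ≥0∞) * phiInv φ x t ≤ phiInv φ y t

/-- The condition `(A2)` (on all of `ℝⁿ`). -/
def A2 (φ : RSp n → ℝ≥0 → ℝ≥0∞) : Prop :=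
  ∃ φi : ℝ≥0 → ℝ≥0∞, IsWeakPhi Set.univ (fun _ : RSp n => φi) ∧
  ∃ h : RSp n → ℝ≥0∞, (∫⁻ x, h x) < ∞ ∧ (∃ M : ℝ≥0, ∀ᵐ x ∂(volume : Measure (RSp n)), h x ≤ M) ∧
  ∃ β : ℝ≥0, 0 < β ∧ β ≤ 1 ∧ ∃ s : ℝ≥0, 0 < s ∧
    ∀ᵐ x ∂(volume : Measure (RSp n)), ∀ t : ℝ≥0,
      (φi t ≤ (s : ℝ≥0∞) → φ x (β * t) ≤ φi t + h x) ∧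
      (φ x t ≤ (s : ℝ≥0∞) → φi (β * t) ≤ φ x t + h x)

/-- Membership in the generalized Orlicz space `L^φ(Ω)`. -/
def MemOrlicz (φ : RSp n → ℝ≥0 → ℝ≥0∞) (Ω : Set (RSp n)) (f : RSp n → ℝ) : Prop :=
  AEMeasurable f (volume.restrict Ω) ∧
  ∃ lam : ℝ≥0, 0 < lam ∧ (∫⁻ x in Ω, φ x (lam * ‖f x‖₊) ∂volume) < ∞

/-- The Luxemburg (quasi)norm of `L^φ(Ω)`. -/
def orliczNorm (φ : RSp n → ℝ≥0 → ℝ≥0∞) (Ω : Set (RSp n)) (f : RSp n → ℝ) : ℝ≥0∞ :=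
  sInf ((fun lam : ℝ≥0 => (lam : ℝ≥0∞)) ''
    {lam : ℝ≥0 | 0 < lam ∧ (∫⁻ x in Ω, φ x (‖f x‖₊ / lam) ∂volume) ≤ 1})

/-- The canonical extension of `φ(x,·)` to `[0,∞]`. -/
def phiE (φ : RSp n → ℝ≥0 → ℝ≥0∞) (x : RSp n) (t : ℝ≥0∞) : ℝ≥0∞ :=
  ⨆ (s : ℝ≥0) (_ : (s : ℝ≥0∞) ≤ t), φ x s

/-- The Luxemburg (quasi)norm for `[0,∞]`-valued functions. -/
def orliczNormE (φ : RSp n → ℝ≥0 → ℝ≥0∞) (Ω : Set (RSp n)) (g : RSp n → ℝ≥0∞) : ℝ≥0∞ :=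
  sInf ((fun lam : ℝ≥0 => (lam : ℝ≥0∞)) ''
    {lam : ℝ≥0 | 0 < lam ∧ (∫⁻ x in Ω, phiE φ x (g x / (lam : ℝ≥0∞)) ∂volume) ≤ 1})

/-- The average `b_Q` of `b` over the cube `Q`. -/
def cubeAvg (Q : Cube n) (b : RSp n → ℝ) : ℝ := ⨍ x in Q.set, b x

/-- The BMO seminorm `‖b‖_*`. -/
def bmoNorm (b : RSp n → ℝ) : ℝ≥0∞ :=
  ⨆ Q : Cube n, (volume Q.set)⁻¹ * ∫⁻ x in Q.set, ‖b x - cubeAvg Q b‖₊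

/-- `b ∈ BMO(ℝⁿ)`. -/
def IsBMO (b : RSp n → ℝ) : Prop := LocallyIntegrable b volume ∧ bmoNorm b < ∞

/-- The non-centred Hardy–Littlewood maximal function (over axes-parallel cubes). -/
def maximal (f : RSp n → ℝ) (x : RSp n) : ℝ≥0∞ :=
  ⨆ (Q : Cube n) (_ : x ∈ Q.set), (volume Q.set)⁻¹ * ∫⁻ y in Q.set, (‖f y‖₊ : ℝ≥0∞) ∂volume

/-- The fractional maximal function `M_α`. -/
def fracMaximal (α : ℝ) (f : RSp n → ℝ) (x : RSp n) : ℝ≥0∞ :=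
  ⨆ (Q : Cube n) (_ : x ∈ Q.set),
    volume Q.set ^ (α / (n : ℝ) - 1) * ∫⁻ y in Q.set, (‖f y‖₊ : ℝ≥0∞) ∂volume

/-- The maximal function restricted to subcubes of `Q₀`. -/
def restMaximal (Q₀ : Cube n) (f : RSp n → ℝ) (x : RSp n) : ℝ≥0∞ :=
  ⨆ (Q : Cube n) (_ : x ∈ Q.set) (_ : Q.set ⊆ Q₀.set),
    (volume Q.set)⁻¹ * ∫⁻ y in Q.set, (‖f y‖₊ : ℝ≥0∞) ∂volume

/-- The fractional maximal function restricted to subcubes of `Q₀`. -/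
def restFracMaximal (α : ℝ) (Q₀ : Cube n) (f : RSp n → ℝ) (x : RSp n) : ℝ≥0∞ :=
  ⨆ (Q : Cube n) (_ : x ∈ Q.set) (_ : Q.set ⊆ Q₀.set),
    volume Q.set ^ (α / (n : ℝ) - 1) * ∫⁻ y in Q.set, (‖f y‖₊ : ℝ≥0∞) ∂volume

/-- The sharp maximal function `M♯`. -/
def sharpMaximal (f : RSp n → ℝ) (x : RSp n) : ℝ≥0∞ :=
  ⨆ (Q : Cube n) (_ : x ∈ Q.set),
    (volume Q.set)⁻¹ * ∫⁻ y in Q.set, (‖f y - ⨍ z in Q.set, f z‖₊ : ℝ≥0∞) ∂volume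

/-- The maximal commutator `M_b`. -/
def maximalComm (b f : RSp n → ℝ) (x : RSp n) : ℝ≥0∞ :=
  ⨆ (Q : Cube n) (_ : x ∈ Q.set),
    (volume Q.set)⁻¹ * ∫⁻ y in Q.set, (‖b x - b y‖₊ : ℝ≥0∞) * (‖f y‖₊ : ℝ≥0∞) ∂volume

/-- The fractional maximal commutator `M_{b,α}`. -/
def fracMaximalComm (α : ℝ) (b f : RSp n → ℝ) (x : RSp n) : ℝ≥0∞ :=
  ⨆ (Q : Cube n) (_ : x ∈ Q.set),
    volume Q.set ^ (α / (n : ℝ) - 1) *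
      ∫⁻ y in Q.set, (‖b x - b y‖₊ : ℝ≥0∞) * (‖f y‖₊ : ℝ≥0∞) ∂volume

/-- The commutator `[M,b]f = M(bf) − b·Mf` of the maximal operator. -/
def maximalCommutator (b f : RSp n → ℝ) (x : RSp n) : ℝ :=
  (maximal (fun y => b y * f y) x).toReal - b x * (maximal f x).toReal

/-- The commutator `[M_α,b]f = M_α(bf) − b·M_α f` of the fractional maximal operator. -/
def fracMaximalCommutator (α : ℝ) (b f : RSp n → ℝ) (x : RSp n) : ℝ :=
  (fracMaximal α (fun y => b y * f y) x).toReal - b x * (fracMaximal α f x).toReal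

/-- The Riesz potential `I_α f`. -/
def riesz (α : ℝ) (f : RSp n → ℝ) (x : RSp n) : ℝ :=
  ∫ y, f y / dist x y ^ ((n : ℝ) - α)

/-- The commutator `[I_α, b]f = I_α(bf) − b·I_α f` of the Riesz potential. -/
def rieszCommutator (α : ℝ) (b f : RSp n → ℝ) (x : RSp n) : ℝ :=
  riesz α (fun y => b y * f y) x - b x * riesz α f x

/-- The operator `I_{b,α} f(x) = ∫ |b(x)−b(y)|·|x−y|^{α−n} f(y) dy`. -/
def rieszAbs (α : ℝ) (b f : RSp n → ℝ) (x : RSp n) : ℝ :=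
  ∫ y, |b x - b y| / dist x y ^ ((n : ℝ) - α) * f y

/-- Equivalence `φ ≃ ψ` of Φ-functions. -/
def PhiEquiv (φ ψ : RSp n → ℝ≥0 → ℝ≥0∞) : Prop :=
  ∃ L : ℝ≥0, 1 ≤ L ∧ ∀ x : RSp n, ∀ t : ℝ≥0, ψ x (t / L) ≤ φ x t ∧ φ x t ≤ ψ x (L * t)

/-- Weak equivalence `φ ∼ ψ` of Φ-functions. -/
def PhiWeakEquiv (φ ψ : RSp n → ℝ≥0 → ℝ≥0∞) : Prop :=
  ∃ L : ℝ≥0, 1 ≤ L ∧ ∃ h : RSp n → ℝ≥0∞, (∫⁻ x, h x) < ∞ ∧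
    ∀ᵐ x ∂(volume : Measure (RSp n)), ∀ t : ℝ≥0,
      ψ x t ≤ φ x (L * t) + h x ∧ φ x t ≤ ψ x (L * t) + h x

/-- The relation `φ⁻¹(x,t) ≈ t^{α/n}·ψ⁻¹(x,t)` with constants independent of `x` and `t > 0`. -/
def FracInvRel (α : ℝ) (φ ψ : RSp n → ℝ≥0 → ℝ≥0∞) : Prop :=
  ∃ c₁ c₂ : ℝ≥0, 0 < c₁ ∧ ∀ x : RSp n, ∀ t : ℝ≥0, 0 < t →
    (c₁ : ℝ≥0∞) * ((t : ℝ≥0∞) ^ (α / (n : ℝ)) * phiInv ψ x t) ≤ phiInv φ x t ∧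
    phiInv φ x t ≤ (c₂ : ℝ≥0∞) * ((t : ℝ≥0∞) ^ (α / (n : ℝ)) * phiInv ψ x t)

/-- The characteristic function of a cube, as a real-valued function. -/
def cubeIndicator (Q : Cube n) : RSp n → ℝ := Q.set.indicator 1

end

/-!
The regularization is carried out on the level of the inverses. Up to constants and an integrable
error, `(A2)` says that `φ⁻¹(x, t)` has a limit `D t` as `x → ∞` for `t ≤ 1`; replacing `φ⁻¹(x, t)`
by `D t` for `t < 1` removes the dependence on `x` there, so that `(A1)` becomes an estimate on
cubes of every size, while `(A0)` makes the two pieces fit together at `t = 1`. By `(aInc)` and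
`(aDec)`, the glued function still grows at least like `t ^ r` and at most like `t ^ (1 / p)`, and
multiplication by `t ^ (-α / n)`, which passes from `φ` to `ψ`, shifts these two exponents to
`r - α / n > 0` and `1 / p - α / n ≤ 1`. Finally, a function whose growth exponents lie in `(0, 1]`
is, up to constants, the inverse of a finite convex function.
-/

section WithinFactor

variable {M N : ℝ≥0} {a b c : ℝ≥0∞}

/-- The two-sided comparison `a ≈ b` with the explicit constant `M`. -/
def WithinFactor (M : ℝ≥0) (a b : ℝ≥0∞) : Prop :=
  a ≤ M * b ∧ b ≤ M * a

namespace WithinFactor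

lemma refl (hM : 1 ≤ M) (a : ℝ≥0∞) : WithinFactor M a a := by
  have h : a ≤ M * a := le_mul_of_one_le_left zero_le (by exact_mod_cast hM)
  exact ⟨h, h⟩

lemma symm (h : WithinFactor M a b) : WithinFactor M b a := ⟨h.2, h.1⟩

lemma trans (h : WithinFactor M a b) (h' : WithinFactor N b c) : WithinFactor (M * N) a c := by
  constructor
  · calc a ≤ M * b := h.1
      _ ≤ M * (N * c) := by gcongr; exact h'.1
      _ = (M * N : ℝ≥0) * c := by push_cast; ring
  · calc c ≤ N * b := h'.2
      _ ≤ N * (M * a) := by gcongr; exact h.2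
      _ = (M * N : ℝ≥0) * a := by push_cast; ring

lemma mono (h : WithinFactor M a b) (hMN : M ≤ N) : WithinFactor N a b :=
  ⟨h.1.trans (by gcongr), h.2.trans (by gcongr)⟩

lemma mul_left (h : WithinFactor M a b) (k : ℝ≥0∞) : WithinFactor M (k * a) (k * b) := by
  constructor
  · calc k * a ≤ k * (M * b) := by gcongr; exact h.1
      _ = M * (k * b) := by ring
  · calc k * b ≤ k * (M * a) := by gcongr; exact h.2
      _ = M * (k * a) := by ring

lemma limsup {ι : Type*} {F : Filter ι} [F.NeBot] {f : ι → ℝ≥0∞}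
    (h : ∀ᶠ i in F, WithinFactor M a (f i)) : WithinFactor M a (Filter.limsup f F) := by
  refine ⟨?_, limsup_le_of_le (h := h.mono fun _ hi => hi.2)⟩
  rw [← ENNReal.limsup_const_mul_of_ne_top ENNReal.coe_ne_top]
  exact le_limsup_of_frequently_le (h.mono fun _ hi => hi.1).frequently

end WithinFactor

end WithinFactor

section GeneralizedInverse

variable {n : ℕ} {φ : RSp n → ℝ≥0 → ℝ≥0∞} {x y : RSp n} {u v : ℝ≥0∞} {s : ℝ≥0}

lemma phiInv_le_coe (h : v ≤ φ x s) : phiInv φ x v ≤ s :=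
  sInf_le ⟨s, h, rfl⟩

lemma le_phiInv_iff {c : ℝ≥0∞} : c ≤ phiInv φ x v ↔ ∀ s : ℝ≥0, v ≤ φ x s → c ≤ s := by
  simp only [phiInv, le_sInf_iff, forall_mem_image, mem_ofPred_eq]

lemma le_apply_of_phiInv_lt (hφ : Monotone (φ x)) (h : phiInv φ x v < s) : v ≤ φ x s := by
  obtain ⟨_, ⟨t, ht, rfl⟩, hts⟩ := sInf_lt_iff.1 h
  exact ht.trans (hφ (ENNReal.coe_lt_coe.1 hts).le)

lemma phiInv_mono : Monotone (phiInv φ x) :=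
  fun _ _ h => le_phiInv_iff.2 fun _ hs => phiInv_le_coe (h.trans hs)

@[simp]
lemma phiInv_zero : phiInv φ x 0 = 0 :=
  nonpos_iff_eq_zero.1 (phiInv_le_coe (s := 0) zero_le)

lemma phiInv_le_mul_of_forall {c : ℝ≥0} (hc : c ≠ 0)
    (h : ∀ s : ℝ≥0, u ≤ φ x s → v ≤ φ y (c * s)) : phiInv φ y v ≤ c * phiInv φ x u := by
  have hc' : (c : ℝ≥0∞) ≠ 0 := by exact_mod_cast hc
  rw [← ENNReal.inv_mul_le_iff hc' ENNReal.coe_ne_top, le_phiInv_iff]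
  intro s hs
  rw [ENNReal.inv_mul_le_iff hc' ENNReal.coe_ne_top]
  exact_mod_cast phiInv_le_coe (h s hs)

lemma IsWeakPhi.phiInv_ne_zero (hφ : IsWeakPhi univ φ) (x : RSp n) (hv : v ≠ 0) :
    phiInv φ x v ≠ 0 := by
  obtain ⟨s, hs, hsv⟩ : ∃ s : ℝ≥0, 0 < s ∧ φ x s < v :=
    (eventually_mem_nhdsWithin.and
      ((hφ.lim_zero x (mem_univ x)).eventually_lt_const (pos_iff_ne_zero.2 hv))).exists
  intro h0
  have h : phiInv φ x v < s := by rw [h0]; exact_mod_cast hs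
  exact (le_apply_of_phiInv_lt (hφ.mono x (mem_univ x)) h).not_gt hsv

lemma IsWeakPhi.phiInv_ne_top (hφ : IsWeakPhi univ φ) (x : RSp n) (hv : v ≠ ∞) :
    phiInv φ x v ≠ ∞ := by
  obtain ⟨s, hs⟩ :=
    ((hφ.lim_top x (mem_univ x)).eventually_const_lt (lt_top_iff_ne_top.2 hv)).exists
  exact ne_top_of_le_ne_top ENNReal.coe_ne_top (phiInv_le_coe hs.le)

lemma phiInv_eq_iInf_rat (hφ : Monotone (φ x)) :
    phiInv φ x v =
      ⨅ q : ℚ, if v ≤ φ x (q : ℝ).toNNReal then ((q : ℝ).toNNReal : ℝ≥0∞) else ∞ := by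
  refine le_antisymm (le_iInf fun q => ?_) (le_of_forall_gt fun c hc => ?_)
  · split_ifs with h
    exacts [phiInv_le_coe h, le_top]
  · obtain ⟨q, -, hq, hqc⟩ := ENNReal.lt_iff_exists_rat_btwn.1 hc
    refine (iInf_le _ q).trans_lt ?_
    rwa [if_pos (le_apply_of_phiInv_lt hφ hq)]

lemma IsWeakPhi.aemeasurable_phiInv (hφ : IsWeakPhi univ φ) (v : ℝ≥0∞) :
    AEMeasurable (fun x => phiInv φ x v) volume := by
  simp only [fun x => phiInv_eq_iInf_rat (v := v) (hφ.mono x (mem_univ x))]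
  refine AEMeasurable.iInf fun q => ?_
  have hq : AEMeasurable (fun x => φ x (q : ℝ).toNNReal) volume := by
    simpa only [Measure.restrict_univ] using hφ.meas _ measurable_const
  exact (Measurable.ite measurableSet_Ici measurable_const measurable_const :
    Measurable fun z : ℝ≥0∞ => if v ≤ z then ((q : ℝ).toNNReal : ℝ≥0∞) else ∞).comp_aemeasurable hq

end GeneralizedInverse

section Growth

lemma mul_le_apply_of_div_rpow_le {g : ℝ≥0 → ℝ≥0∞} {q : ℝ} {L c l s : ℝ≥0}
    (hl : l ≠ 0) (hlq : l ^ q = L * c) (hs : s ≠ 0)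
    (h : g s / (s : ℝ≥0∞) ^ q ≤ L * (g (l * s) / ((l * s : ℝ≥0) : ℝ≥0∞) ^ q)) :
    c * g s ≤ g (l * s) := by
  have hsq : ((s ^ q : ℝ≥0) : ℝ≥0∞) ≠ 0 := by simp [hs]
  have hlsq : (((l * s) ^ q : ℝ≥0) : ℝ≥0∞) ≠ 0 := by simp [hs, hl]
  have hconst : c * s ^ q * L = (l * s) ^ q := by rw [NNReal.mul_rpow, hlq]; ring
  rw [← ENNReal.coe_rpow_of_ne_zero hs, ← ENNReal.coe_rpow_of_ne_zero (mul_ne_zero hl hs)] at h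
  calc c * g s = c * ((s ^ q : ℝ≥0) * (g s / (s ^ q : ℝ≥0))) := by
        rw [ENNReal.mul_div_cancel hsq ENNReal.coe_ne_top]
    _ ≤ c * ((s ^ q : ℝ≥0) * (L * (g (l * s) / ((l * s) ^ q : ℝ≥0)))) := by gcongr
    _ = (c * s ^ q * L : ℝ≥0) * (g (l * s) / ((l * s) ^ q : ℝ≥0)) := by push_cast; ring
    _ = g (l * s) := by rw [hconst, ENNReal.mul_div_cancel hlsq ENNReal.coe_ne_top]

variable {n : ℕ} {φ : RSp n → ℝ≥0 → ℝ≥0∞}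

lemma AInc.exists_phiInv_mul_le {p : ℝ} (hp : 0 < p) (hφ : IsWeakPhi univ φ)
    (hinc : AInc p univ φ) :
    ∃ L : ℝ≥0, ∀ x (c : ℝ≥0), 1 ≤ c → ∀ v : ℝ≥0∞,
      phiInv φ x (c * v) ≤ ((L * c) ^ (1 / p) : ℝ≥0) * phiInv φ x v := by
  obtain ⟨L, hL, hinc⟩ := hinc
  refine ⟨L, fun x c hc v => ?_⟩
  have hl : 1 ≤ (L * c) ^ (1 / p) := NNReal.one_le_rpow (one_le_mul hL hc) (by positivity)
  have hl0 : (L * c) ^ (1 / p) ≠ 0 := (zero_lt_one.trans_le hl).ne'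
  refine phiInv_le_mul_of_forall hl0 fun s hvs => (mul_le_mul_right hvs _).trans ?_
  rcases eq_or_ne s 0 with rfl | hs
  · simp [hφ.zero x (mem_univ x)]
  refine mul_le_apply_of_div_rpow_le hl0 (NNReal.rpow_self_rpow_inv hp.ne' _) hs ?_
  rcases (le_mul_of_one_le_left zero_le hl : s ≤ (L * c) ^ (1 / p) * s).eq_or_lt with h | h
  · rw [← h]
    exact le_mul_of_one_le_left zero_le (by exact_mod_cast hL)
  · exact hinc x (mem_univ x) _ _ (pos_iff_ne_zero.2 hs) h

lemma ADec.exists_phiInv_mul_le {q : ℝ} (hq : 0 < q) (hφ : IsWeakPhi univ φ)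
    (hdec : ADec q univ φ) :
    ∃ L : ℝ≥0, ∀ x (c : ℝ≥0), 0 < c → c ≤ 1 → ∀ v : ℝ≥0∞,
      phiInv φ x (c * v) ≤ ((L * c) ^ (1 / q) : ℝ≥0) * phiInv φ x v := by
  obtain ⟨L, hL, hdec⟩ := hdec
  refine ⟨L, fun x c hc hc1 v => ?_⟩
  have hl0 : (L * c) ^ (1 / q) ≠ 0 :=
    (NNReal.rpow_pos (mul_pos (zero_lt_one.trans_le hL) hc)).ne'
  refine phiInv_le_mul_of_forall hl0 fun s hvs => (mul_le_mul_right hvs _).trans ?_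
  rcases eq_or_ne s 0 with rfl | hs
  · simp [hφ.zero x (mem_univ x)]
  rcases le_or_gt 1 ((L * c) ^ (1 / q)) with hl | hl
  · calc c * φ x s ≤ 1 * φ x s := by gcongr; exact_mod_cast hc1
      _ = φ x s := one_mul _
      _ ≤ φ x ((L * c) ^ (1 / q) * s) :=
        hφ.mono x (mem_univ x) (le_mul_of_one_le_left zero_le hl)
  · refine mul_le_apply_of_div_rpow_le hl0 (NNReal.rpow_self_rpow_inv hq.ne' _) hs ?_
    have hs' := pos_iff_ne_zero.2 hs
    exact hdec x (mem_univ x) _ _ (mul_pos (pos_iff_ne_zero.2 hl0) hs')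
      (mul_lt_of_lt_one_left hs' hl)

/-- `w` is positive and finite and grows, up to the factor `C`, at least like `t ^ r` and at most
like `t ^ s`: its lower and upper indices are at least `r` and at most `s`. It suffices to ask for
`0 < w < ∞` at the single point `1`, and the value `w 0` is left unconstrained. -/
structure HasGrowth (C : ℝ≥0) (r s : ℝ) (w : ℝ≥0 → ℝ≥0∞) : Prop where
  apply_one_ne_zero : w 1 ≠ 0
  apply_one_ne_top : w 1 ≠ ∞
  upper : ∀ ⦃t u : ℝ≥0⦄, 0 < t → t ≤ u → w u ≤ (C * (u / t) ^ s : ℝ≥0) * w t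
  lower : ∀ ⦃t u : ℝ≥0⦄, 0 < u → u ≤ t → w u ≤ (C * (u / t) ^ r : ℝ≥0) * w t

theorem exists_hasGrowth_phiInv {p q : ℝ} (hp : 0 < p) (hq : 0 < q) (hφ : IsWeakPhi univ φ)
    (hinc : AInc p univ φ) (hdec : ADec q univ φ) :
    ∃ C, ∀ x, HasGrowth C (1 / q) (1 / p) fun t : ℝ≥0 => phiInv φ x t := by
  obtain ⟨L₁, hL₁⟩ := hinc.exists_phiInv_mul_le hp hφ
  obtain ⟨L₂, hL₂⟩ := hdec.exists_phiInv_mul_le hq hφ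
  have cancel {t u : ℝ≥0} (ht : t ≠ 0) : ((u / t : ℝ≥0) : ℝ≥0∞) * t = u := by
    rw [← ENNReal.coe_mul, div_mul_cancel₀ u ht]
  refine ⟨max (L₁ ^ (1 / p)) (L₂ ^ (1 / q)), fun x =>
    ⟨hφ.phiInv_ne_zero x (by simp), hφ.phiInv_ne_top x (by simp), fun t u ht htu => ?_,
      fun t u hu hut => ?_⟩⟩
  · calc phiInv φ x u = phiInv φ x ((u / t : ℝ≥0) * t) := by rw [cancel ht.ne']
      _ ≤ _ := hL₁ x _ ((one_le_div ht).2 htu) t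
      _ ≤ _ := by rw [NNReal.mul_rpow]; gcongr; exact le_max_left _ _
  · have ht : 0 < t := hu.trans_le hut
    calc phiInv φ x u = phiInv φ x ((u / t : ℝ≥0) * t) := by rw [cancel ht.ne']
      _ ≤ _ := hL₂ x _ (div_pos hu ht) (div_le_one_of_le₀ hut zero_le) t
      _ ≤ _ := by rw [NNReal.mul_rpow]; gcongr; exact le_max_right _ _

namespace HasGrowth

variable {C : ℝ≥0} {r s : ℝ} {w : ℝ≥0 → ℝ≥0∞}

lemma const_pos (hw : HasGrowth C r s w) : 0 < C := by
  refine pos_iff_ne_zero.2 fun hC => hw.apply_one_ne_zero ?_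
  simpa [hC] using hw.upper zero_lt_one le_rfl

lemma exists_le_mul (hw : HasGrowth C r s w) {t u : ℝ≥0} (ht : 0 < t) (hu : 0 < u) :
    ∃ K : ℝ≥0, w u ≤ K * w t := by
  rcases le_total t u with h | h
  exacts [⟨_, hw.upper ht h⟩, ⟨_, hw.lower hu h⟩]

lemma ne_zero (hw : HasGrowth C r s w) {t : ℝ≥0} (ht : 0 < t) : w t ≠ 0 := by
  obtain ⟨K, hK⟩ := hw.exists_le_mul ht zero_lt_one
  intro h0
  exact hw.apply_one_ne_zero (nonpos_iff_eq_zero.1 (by simpa [h0] using hK))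

lemma ne_top (hw : HasGrowth C r s w) {t : ℝ≥0} (ht : 0 < t) : w t ≠ ∞ := by
  obtain ⟨K, hK⟩ := hw.exists_le_mul zero_lt_one ht
  exact ne_top_of_le_ne_top (ENNReal.mul_ne_top ENNReal.coe_ne_top hw.apply_one_ne_top) hK

lemma mono_const (hw : HasGrowth C r s w) {K : ℝ≥0} (hCK : C ≤ K) : HasGrowth K r s w where
  apply_one_ne_zero := hw.apply_one_ne_zero
  apply_one_ne_top := hw.apply_one_ne_top
  upper _ _ ht htu := (hw.upper ht htu).trans (by gcongr)
  lower _ _ hu hut := (hw.lower hu hut).trans (by gcongr)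

lemma tendsto_atTop (hw : HasGrowth C r s w) (hr : 0 < r) : Tendsto w atTop (nhds ∞) := by
  have hC : (C : ℝ≥0∞) ≠ 0 := by exact_mod_cast hw.const_pos.ne'
  have hlim : Tendsto (fun t : ℝ≥0 => w 1 / C * (t : ℝ≥0∞) ^ r) atTop (nhds ∞) := by
    have h := ENNReal.Tendsto.const_mul (a := w 1 / C)
      ((ENNReal.tendsto_rpow_at_top hr).comp (ENNReal.tendsto_coe_nhds_top.2 tendsto_id))
      (Or.inl ENNReal.top_ne_zero)
    rwa [ENNReal.mul_top (ENNReal.div_ne_zero.2 ⟨hw.apply_one_ne_zero, ENNReal.coe_ne_top⟩)] at h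
  refine tendsto_nhds_top_mono hlim ?_
  filter_upwards [eventually_ge_atTop 1] with t ht
  have ht0 : t ^ r ≠ 0 := (NNReal.rpow_pos (zero_lt_one.trans_le ht)).ne'
  calc w 1 / C * (t : ℝ≥0∞) ^ r
      ≤ (C * (1 / t) ^ r : ℝ≥0) * w t / C * (t : ℝ≥0∞) ^ r := by
        gcongr
        exact hw.lower zero_lt_one ht
    _ = (C / C) * (((1 / t) ^ r * t ^ r : ℝ≥0) * w t) := by
        rw [← ENNReal.coe_rpow_of_nonneg t hr.le]
        push_cast
        simp only [div_eq_mul_inv]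
        ring
    _ = w t := by
        rw [ENNReal.div_self hC ENNReal.coe_ne_top, NNReal.div_rpow, NNReal.one_rpow,
          one_div_mul_cancel ht0, ENNReal.coe_one, one_mul, one_mul]

lemma rpow_mul (hw : HasGrowth C r s w) (c : ℝ) :
    HasGrowth C (r + c) (s + c) fun t => (t ^ c : ℝ≥0) * w t := by
  have key {t u : ℝ≥0} {e : ℝ} (ht : 0 < t) (hu : 0 < u)
      (h : w u ≤ (C * (u / t) ^ e : ℝ≥0) * w t) :
      (u ^ c : ℝ≥0) * w u ≤ (C * (u / t) ^ (e + c) : ℝ≥0) * ((t ^ c : ℝ≥0) * w t) := by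
    calc (u ^ c : ℝ≥0) * w u ≤ (u ^ c : ℝ≥0) * ((C * (u / t) ^ e : ℝ≥0) * w t) := by gcongr
      _ = (C * (u / t) ^ e * ((u / t) * t) ^ c : ℝ≥0) * w t := by
        rw [div_mul_cancel₀ u ht.ne']
        push_cast
        ring
      _ = (C * (u / t) ^ (e + c) : ℝ≥0) * ((t ^ c : ℝ≥0) * w t) := by
        rw [NNReal.mul_rpow, NNReal.rpow_add (div_pos hu ht).ne']
        push_cast
        ring
  exact
    { apply_one_ne_zero := by simpa using hw.apply_one_ne_zero
      apply_one_ne_top := by simpa using hw.apply_one_ne_top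
      upper := fun t u ht htu => key ht (ht.trans_le htu) (hw.upper ht htu)
      lower := fun t u hu hut => key (hu.trans_le hut) hu (hw.lower hu hut) }

lemma limsup {ι : Type*} {F : Filter ι} [F.NeBot] {w : ι → ℝ≥0 → ℝ≥0∞} {M : ℝ≥0}
    (hw : ∀ i, HasGrowth C r s (w i)) (h1 : ∀ᶠ i in F, WithinFactor M 1 (w i 1)) :
    HasGrowth C r s fun t => Filter.limsup (fun i => w i t) F where
  apply_one_ne_zero h0 := by simpa [h0] using (WithinFactor.limsup h1).1
  apply_one_ne_top :=
    ne_top_of_le_ne_top (by simp : (M : ℝ≥0∞) * 1 ≠ ∞) (WithinFactor.limsup h1).2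
  upper t u ht htu := by
    rw [← ENNReal.limsup_const_mul_of_ne_top ENNReal.coe_ne_top]
    exact limsup_le_limsup (.of_forall fun i => (hw i).upper ht htu)
  lower t u hu hut := by
    rw [← ENNReal.limsup_const_mul_of_ne_top ENNReal.coe_ne_top]
    exact limsup_le_limsup (.of_forall fun i => (hw i).lower hu hut)

end HasGrowth

/-- The function equal to `w₀` below `1` and to `w₁` from `1` on. -/
noncomputable def glue (w₀ w₁ : ℝ≥0 → ℝ≥0∞) (t : ℝ≥0) : ℝ≥0∞ :=
  if 1 ≤ t then w₁ t else w₀ t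

lemma glue_of_one_le {w₀ w₁ : ℝ≥0 → ℝ≥0∞} {t : ℝ≥0} (ht : 1 ≤ t) : glue w₀ w₁ t = w₁ t :=
  if_pos ht

lemma glue_of_lt_one {w₀ w₁ : ℝ≥0 → ℝ≥0∞} {t : ℝ≥0} (ht : t < 1) : glue w₀ w₁ t = w₀ t :=
  if_neg ht.not_ge

lemma HasGrowth.glue {C c : ℝ≥0} {r s : ℝ} {w₀ w₁ : ℝ≥0 → ℝ≥0∞} (h₀ : HasGrowth C r s w₀)
    (h₁ : HasGrowth C r s w₁) (hc : WithinFactor c (w₀ 1) (w₁ 1)) :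
    HasGrowth (max C (C * c * C)) r s (glue w₀ w₁) := by
  have chain {e : ℝ} {t u : ℝ≥0} {a b b' d : ℝ≥0∞} (hab : a ≤ (C * (u / 1) ^ e : ℝ≥0) * b)
      (hbb' : b ≤ c * b') (hbd : b' ≤ (C * (1 / t) ^ e : ℝ≥0) * d) :
      a ≤ (max C (C * c * C) * (u / t) ^ e : ℝ≥0) * d := by
    calc a ≤ (C * (u / 1) ^ e : ℝ≥0) * (c * ((C * (1 / t) ^ e : ℝ≥0) * d)) := by
          grw [hab, hbb', hbd]
      _ = (C * c * C * (u / t) ^ e : ℝ≥0) * d := by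
        rw [div_eq_mul_one_div u t, NNReal.mul_rpow, div_one]
        push_cast
        ring
      _ ≤ (max C (C * c * C) * (u / t) ^ e : ℝ≥0) * d := by
        gcongr
        exact le_max_right _ _
  have h₀' := h₀.mono_const (le_max_left C (C * c * C))
  have h₁' := h₁.mono_const (le_max_left C (C * c * C))
  refine ⟨?_, ?_, fun t u ht htu => ?_, fun t u hu hut => ?_⟩
  · simpa only [glue_of_one_le le_rfl] using h₁.apply_one_ne_zero
  · simpa only [glue_of_one_le le_rfl] using h₁.apply_one_ne_top
  · rcases le_or_gt 1 t with ht1 | ht1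
    · simpa only [glue_of_one_le, ht1, ht1.trans htu] using h₁'.upper ht htu
    rcases le_or_gt 1 u with hu1 | hu1
    · rw [glue_of_one_le hu1, glue_of_lt_one ht1]
      exact chain (h₁.upper zero_lt_one hu1) hc.2 (h₀.upper ht ht1.le)
    · simpa only [glue_of_lt_one, ht1, hu1] using h₀'.upper ht htu
  · rcases le_or_gt 1 u with hu1 | hu1
    · simpa only [glue_of_one_le, hu1, hu1.trans hut] using h₁'.lower hu hut
    rcases le_or_gt 1 t with ht1 | ht1
    · rw [glue_of_lt_one hu1, glue_of_one_le ht1]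
      exact chain (h₀.lower hu hu1.le) hc.1 (h₁.lower zero_lt_one ht1)
    · simpa only [glue_of_lt_one, ht1, hu1] using h₀'.lower hu hut

end Growth

section ConvexInverse

/-- A convex function whose generalized inverse is comparable to `w` when `w` has growth with
indices in `(0, 1]`: the supremum of the lines that vanish at `w t` and have the value `t` at
`2 * w t`. Only the dyadic `t` enter, so that measurable dependence on a parameter is preserved. -/
noncomputable def convexInverse (w : ℝ≥0 → ℝ≥0∞) (τ : ℝ≥0) : ℝ≥0∞ :=
  ⨆ k : ℤ, ((2 ^ k : ℝ≥0) : ℝ≥0∞) * (τ / w (2 ^ k) - 1)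

variable {C : ℝ≥0} {r s : ℝ} {w : ℝ≥0 → ℝ≥0∞}

lemma convexInverse_mono : Monotone (convexInverse w) :=
  fun _ _ h => iSup_mono fun _ => by gcongr

@[simp]
lemma convexInverse_zero : convexInverse w 0 = 0 := by
  simp [convexInverse]

lemma convexInverse_convex (σ τ : ℝ≥0) {a b : ℝ≥0} (hab : a + b = 1) :
    convexInverse w (a * σ + b * τ) ≤ a * convexInverse w σ + b * convexInverse w τ := by
  refine iSup_le fun k => ?_
  set W := w (2 ^ k)
  have hab' : (a : ℝ≥0∞) + b = 1 := by exact_mod_cast hab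
  have hline : ((a * σ + b * τ : ℝ≥0) : ℝ≥0∞) / W - 1 ≤ a * (σ / W - 1) + b * (τ / W - 1) := by
    rw [tsub_le_iff_right]
    calc ((a * σ + b * τ : ℝ≥0) : ℝ≥0∞) / W = a * (σ / W) + b * (τ / W) := by
          push_cast
          rw [ENNReal.add_div, mul_div_assoc, mul_div_assoc]
      _ ≤ a * ((σ / W - 1) + 1) + b * ((τ / W - 1) + 1) := by
          gcongr <;> exact le_tsub_add
      _ = a * (σ / W - 1) + b * (τ / W - 1) + (a + b) := by ring
      _ = a * (σ / W - 1) + b * (τ / W - 1) + 1 := by rw [hab']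
  calc ((2 ^ k : ℝ≥0) : ℝ≥0∞) * (((a * σ + b * τ : ℝ≥0) : ℝ≥0∞) / W - 1)
      ≤ (2 ^ k : ℝ≥0) * (a * (σ / W - 1) + b * (τ / W - 1)) := by gcongr
    _ = a * ((2 ^ k : ℝ≥0) * (σ / W - 1)) + b * ((2 ^ k : ℝ≥0) * (τ / W - 1)) := by ring
    _ ≤ a * convexInverse w σ + b * convexInverse w τ := by
        gcongr <;> exact le_iSup (fun k : ℤ => ((2 ^ k : ℝ≥0) : ℝ≥0∞) * (_ / w (2 ^ k) - 1)) k

lemma convexInverse_div_le {σ τ : ℝ≥0} (hσ : 0 < σ) (hστ : σ < τ) :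
    convexInverse w σ / σ ≤ convexInverse w τ / τ := by
  have hτ : τ ≠ 0 := (hσ.trans hστ).ne'
  have hσ' : (σ : ℝ≥0∞) ≠ 0 := by exact_mod_cast hσ.ne'
  have hσ1 : σ / τ ≤ 1 := div_le_one_of_le₀ hστ.le zero_le
  have h := convexInverse_convex (w := w) τ 0 (add_tsub_cancel_of_le hσ1)
  rw [mul_zero, add_zero, div_mul_cancel₀ σ hτ, convexInverse_zero, mul_zero, add_zero] at h
  rw [ENNReal.div_le_iff hσ' ENNReal.coe_ne_top]
  calc convexInverse w σ ≤ (σ / τ : ℝ≥0) * convexInverse w τ := h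
    _ = convexInverse w τ / τ * σ := by
      rw [ENNReal.coe_div hτ]
      simp only [div_eq_mul_inv]
      ring

lemma zpow_le_convexInverse {k : ℤ} {τ : ℝ≥0} (h0 : w (2 ^ k) ≠ 0) (hτ : 2 * w (2 ^ k) ≤ τ) :
    ((2 ^ k : ℝ≥0) : ℝ≥0∞) ≤ convexInverse w τ := by
  have hW : w (2 ^ k) ≠ ∞ := by
    intro hW
    simp [hW] at hτ
  have h2 : 2 ≤ (τ : ℝ≥0∞) / w (2 ^ k) := by
    rwa [ENNReal.le_div_iff_mul_le (Or.inl h0) (Or.inl hW)]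
  have h1 : 1 ≤ (τ : ℝ≥0∞) / w (2 ^ k) - 1 :=
    ENNReal.le_sub_of_add_le_right ENNReal.one_ne_top (by rwa [one_add_one_eq_two])
  exact (le_mul_of_one_le_right zero_le h1).trans
    (le_iSup (fun k : ℤ => ((2 ^ k : ℝ≥0) : ℝ≥0∞) * (τ / w (2 ^ k) - 1)) k)

lemma HasGrowth.upper_linear (hw : HasGrowth C r s w) (hs : s ≤ 1) {t u : ℝ≥0} (ht : 0 < t)
    (htu : t ≤ u) : w u ≤ (C * (u / t) : ℝ≥0) * w t := by
  have h : (u / t) ^ s ≤ u / t := by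
    simpa using NNReal.rpow_le_rpow_of_exponent_le ((one_le_div ht).2 htu) hs
  exact (hw.upper ht htu).trans (by gcongr)

lemma HasGrowth.le_const_mul (hw : HasGrowth C r s w) (hr : 0 ≤ r) {t u : ℝ≥0} (hu : 0 < u)
    (hut : u ≤ t) : w u ≤ C * w t := by
  have h : C * (u / t) ^ r ≤ C :=
    mul_le_of_le_one_right zero_le (NNReal.rpow_le_one (div_le_one_of_le₀ hut zero_le) hr)
  exact (hw.lower hu hut).trans (by gcongr)

lemma HasGrowth.line_le (hw : HasGrowth C r s w) (hr : 0 ≤ r) (hs : s ≤ 1) {t m σ τ : ℝ≥0}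
    (ht : 0 < t) (hm : 0 < m) (hτ : C * τ ≤ w m) (hστ : σ ≤ τ) :
    t * (τ / w t - 1) ≤ t * (σ / w t - 1) + C * m / w m * (τ - σ : ℝ≥0) := by
  have ht0 := hw.ne_zero ht
  have hm0 := hw.ne_zero hm
  have ht' := hw.ne_top ht
  have hm' := hw.ne_top hm
  -- The lines with `t ≤ m` have slope at most `C * m / w m`; the others still vanish at `τ`.
  rcases le_total t m with htm | hmt
  · have hslope : t / w t ≤ C * m / w m := by
      rw [ENNReal.div_le_iff ht0 ht', ← ENNReal.mul_div_right_comm,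
        ENNReal.le_div_iff_mul_le (Or.inl hm0) (Or.inl hm')]
      calc t * w m ≤ t * ((C * (m / t) : ℝ≥0) * w t) := by grw [hw.upper_linear hs ht htm]
        _ = (C * (t * (m / t)) : ℝ≥0) * w t := by push_cast; ring
        _ = C * m * w t := by rw [mul_div_cancel₀ m ht.ne', ENNReal.coe_mul]
    have hline : (τ : ℝ≥0∞) / w t - 1 ≤ (σ / w t - 1) + (τ - σ : ℝ≥0) / w t := by
      rw [tsub_le_iff_right]
      calc (τ : ℝ≥0∞) / w t = σ / w t + (τ - σ : ℝ≥0) / w t := by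
            rw [← ENNReal.add_div, ← ENNReal.coe_add, add_tsub_cancel_of_le hστ]
        _ ≤ (σ / w t - 1) + 1 + (τ - σ : ℝ≥0) / w t := by grw [← le_tsub_add]
        _ = (σ / w t - 1) + (τ - σ : ℝ≥0) / w t + 1 := by ring
    calc t * (τ / w t - 1) ≤ t * ((σ / w t - 1) + (τ - σ : ℝ≥0) / w t) := by gcongr
      _ = t * (σ / w t - 1) + t / w t * (τ - σ : ℝ≥0) := by
        simp only [div_eq_mul_inv]
        ring
      _ ≤ _ := by gcongr
  · have hC : (C : ℝ≥0∞) ≠ 0 := by exact_mod_cast hw.const_pos.ne'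
    have hτt : (τ : ℝ≥0∞) ≤ w t := (ENNReal.mul_le_mul_iff_right hC ENNReal.coe_ne_top).1
      (hτ.trans (hw.le_const_mul hr hm hmt))
    have hτ1 : (τ : ℝ≥0∞) / w t ≤ 1 := ENNReal.div_le_of_le_mul (by rwa [one_mul])
    simp [tsub_eq_zero_of_le hτ1]

lemma HasGrowth.convexInverse_le_add (hw : HasGrowth C r s w) (hr : 0 ≤ r) (hs : s ≤ 1)
    {m σ τ : ℝ≥0} (hm : 0 < m) (hτ : C * τ ≤ w m) (hστ : σ ≤ τ) :
    convexInverse w τ ≤ convexInverse w σ + C * m / w m * (τ - σ : ℝ≥0) := by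
  refine iSup_le fun k => (hw.line_le hr hs (by positivity) hm hτ hστ).trans ?_
  gcongr
  exact le_iSup (fun k : ℤ => ((2 ^ k : ℝ≥0) : ℝ≥0∞) * (σ / w (2 ^ k) - 1)) k

lemma HasGrowth.convexInverse_le (hw : HasGrowth C r s w) (hr : 0 ≤ r) (hs : s ≤ 1)
    {m τ : ℝ≥0} (hm : 0 < m) (hτ : C * τ ≤ w m) :
    convexInverse w τ ≤ C * m / w m * τ := by
  simpa using hw.convexInverse_le_add hr hs hm hτ zero_le

lemma HasGrowth.continuous_convexInverse (hw : HasGrowth C r s w) (hr : 0 < r) (hs : s ≤ 1) :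
    Continuous (convexInverse w) := by
  refine continuous_iff_continuousAt.2 fun τ₀ => ?_
  set T := τ₀ + 1
  obtain ⟨m, hm, hT⟩ : ∃ m : ℝ≥0, 0 < m ∧ (C * T : ℝ≥0∞) ≤ w m :=
    ((eventually_gt_atTop 0).and ((hw.tendsto_atTop hr).eventually_const_le
      (ENNReal.mul_lt_top ENNReal.coe_lt_top ENNReal.coe_lt_top))).exists
  have hK : C * m / w m ≠ ∞ :=
    ENNReal.div_ne_top (ENNReal.mul_ne_top ENNReal.coe_ne_top ENNReal.coe_ne_top) (hw.ne_zero hm)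
  have hcont : Continuous fun τ => convexInverse w (min τ T) := by
    refine continuous_of_le_add_edist (C * m / w m) hK fun τ σ => ?_
    rcases le_total τ σ with h | h
    · exact (convexInverse_mono (min_le_min_right T h)).trans le_self_add
    have hdist : ((min τ T - min σ T : ℝ≥0) : ℝ≥0∞) ≤ edist τ σ := by
      rw [edist_nndist, NNReal.nndist_eq, ENNReal.coe_le_coe]
      refine le_max_of_le_left (tsub_le_iff_right.2 ?_)
      rw [← min_add_add_left, tsub_add_cancel_of_le h]
      exact min_le_min_left τ le_add_self
    have hτ : C * (min τ T : ℝ≥0) ≤ w m := by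
      grw [min_le_right τ T, hT]
    grw [hw.convexInverse_le_add hr.le hs hm hτ (min_le_min_right T h), hdist]
  refine hcont.continuousAt.congr ?_
  filter_upwards [Iio_mem_nhds (lt_add_one τ₀)] with τ hτ
  rw [min_eq_left (le_of_lt hτ)]

lemma HasGrowth.tendsto_convexInverse (hw : HasGrowth C r s w) :
    Tendsto (convexInverse w) atTop (nhds ∞) := by
  refine ENNReal.tendsto_nhds_top_iff_nnreal.2 fun K => ?_
  obtain ⟨k, hk⟩ := pow_unbounded_of_one_lt K one_lt_two
  have hpos : (0 : ℝ≥0) < 2 ^ (k : ℤ) := by positivity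
  filter_upwards [eventually_ge_atTop (2 * w (2 ^ (k : ℤ))).toNNReal] with τ hτ
  have htop : 2 * w (2 ^ (k : ℤ)) ≠ ∞ := ENNReal.mul_ne_top ENNReal.ofNat_ne_top (hw.ne_top hpos)
  refine lt_of_lt_of_le ?_
    (zpow_le_convexInverse (hw.ne_zero hpos)
      ((ENNReal.coe_toNNReal htop).ge.trans (ENNReal.coe_le_coe.2 hτ)))
  exact_mod_cast hk

variable {n : ℕ} {E : RSp n → ℝ≥0 → ℝ≥0∞}

theorem isStrongPhi_convexInverse (hE : ∀ x, HasGrowth C r s (E x)) (hr : 0 < r) (hs : s ≤ 1)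
    (hmeas : ∀ t, 0 < t → AEMeasurable (fun x => E x t) volume) :
    IsStrongPhi univ fun x => convexInverse (E x) where
  meas f hf := by
    rw [Measure.restrict_univ]
    refine AEMeasurable.iSup fun k => AEMeasurable.const_mul (AEMeasurable.sub_const ?_ 1) _
    exact hf.coe_nnreal_ennreal.aemeasurable.div (hmeas _ (by positivity))
  mono x _ := convexInverse_mono
  zero x _ := convexInverse_zero
  lim_zero x _ := by
    exact (((hE x).continuous_convexInverse hr hs).tendsto' 0 0 convexInverse_zero).mono_left
      nhdsWithin_le_nhds
  lim_top x _ := (hE x).tendsto_convexInverse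
  almost_inc := ⟨1, le_rfl, fun x _ σ τ hσ hστ => by
    simpa using convexInverse_div_le hσ hστ⟩
  convex := ae_of_all _ fun x σ τ a b hab => convexInverse_convex σ τ hab
  cont := ae_of_all _ fun x => (hE x).continuous_convexInverse hr hs

theorem withinFactor_phiInv_convexInverse {x : RSp n} (hE : HasGrowth C r s (E x))
    (hr : 0 ≤ r) (hs : s ≤ 1) {t : ℝ≥0} (ht : 0 < t) :
    WithinFactor (4 * C) (phiInv (fun x => convexInverse (E x)) x t) (E x t) := by
  have hC' : (C : ℝ≥0∞) ≠ 0 := by exact_mod_cast hE.const_pos.ne'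
  constructor
  · obtain ⟨k, hkt, htk⟩ := NNReal.exists_mem_Ico_zpow ht.ne' one_lt_two
    have hpos : (0 : ℝ≥0) < 2 ^ (k + 1) := by positivity
    have htop : 2 * E x (2 ^ (k + 1)) ≠ ∞ :=
      ENNReal.mul_ne_top ENNReal.ofNat_ne_top (hE.ne_top hpos)
    have hratio : 2 ^ (k + 1) / t ≤ 2 := by
      rw [div_le_iff₀ ht, zpow_add_one₀ two_ne_zero, mul_comm]
      gcongr
    calc phiInv (fun x => convexInverse (E x)) x t
        ≤ (2 * E x (2 ^ (k + 1))).toNNReal := phiInv_le_coe <|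
          (ENNReal.coe_le_coe.2 htk.le).trans
            (zpow_le_convexInverse (hE.ne_zero hpos) (ENNReal.coe_toNNReal htop).ge)
      _ = 2 * E x (2 ^ (k + 1)) := ENNReal.coe_toNNReal htop
      _ ≤ 2 * ((C * (2 ^ (k + 1) / t) : ℝ≥0) * E x t) := by
        grw [hE.upper_linear hs ht htk.le]
      _ ≤ 2 * ((C * 2 : ℝ≥0) * E x t) := by gcongr
      _ = (4 * C : ℝ≥0) * E x t := by
        push_cast
        ring
  · have hlower : E x t ≤ C * phiInv (fun x => convexInverse (E x)) x t := by
      rw [← ENNReal.inv_mul_le_iff hC' ENNReal.coe_ne_top, le_phiInv_iff]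
      intro τ hτ
      rw [ENNReal.inv_mul_le_iff hC' ENNReal.coe_ne_top]
      by_contra! h
      refine hτ.not_gt ?_
      calc convexInverse (E x) τ ≤ C * t / E x t * τ := hE.convexInverse_le hr hs ht h.le
        _ = t * (C * τ / E x t) := by
          simp only [div_eq_mul_inv]
          ring
        _ < t * 1 := by
          gcongr
          · exact ENNReal.coe_ne_top
          rwa [ENNReal.div_lt_iff (Or.inl (hE.ne_zero ht)) (Or.inl (hE.ne_top ht)), one_mul]
        _ = t := mul_one _
    refine hlower.trans ?_
    gcongr
    exact le_mul_of_one_le_left zero_le (by norm_num)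

end ConvexInverse

section WeakEquivalence

variable {n : ℕ} {φ ψ : RSp n → ℝ≥0 → ℝ≥0∞}

lemma le_apply_mul_add_of_phiInv_le {x : RSp n} {M : ℝ≥0} {h : ℝ≥0∞} (hφ : φ x 0 = 0)
    (hψ : Monotone (ψ x))
    (hle : ∀ v : ℝ≥0, 0 < v → h ≤ v → phiInv ψ x v ≤ M * phiInv φ x v) (t : ℝ≥0) :
    φ x t ≤ ψ x ((M + 1) * t) + h := by
  by_contra! hlt
  obtain ⟨v, hv, hvt⟩ := ENNReal.lt_iff_exists_nnreal_btwn.1 hlt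
  have hv0 : 0 < v := by exact_mod_cast zero_le.trans_lt hv
  have ht : 0 < t := by
    refine pos_iff_ne_zero.2 fun h0 => ?_
    simp [h0, hφ] at hvt
  have hinv : phiInv ψ x v < ((M + 1) * t : ℝ≥0) :=
    calc phiInv ψ x v ≤ M * phiInv φ x v := hle v hv0 (le_add_self.trans hv.le)
      _ ≤ M * t := by grw [phiInv_le_coe hvt.le]
      _ < ((M + 1) * t : ℝ≥0) := by
        exact_mod_cast mul_lt_mul_of_pos_right (lt_add_one M) ht
  exact (le_self_add.trans_lt hv).not_ge (le_apply_of_phiInv_lt hψ hinv)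

theorem phiWeakEquiv_of_phiInv (hφ : IsWeakPhi univ φ) (hψ : IsWeakPhi univ ψ) {M : ℝ≥0}
    {h : RSp n → ℝ≥0∞} (hh : ∫⁻ x, h x < ∞)
    (hM : ∀ᵐ x, ∀ v : ℝ≥0, 0 < v → h x ≤ v → WithinFactor M (phiInv φ x v) (phiInv ψ x v)) :
    PhiWeakEquiv φ ψ := by
  refine ⟨M + 1, le_add_self, h, hh, hM.mono fun x hx t => ⟨?_, ?_⟩⟩
  · exact le_apply_mul_add_of_phiInv_le (hψ.zero x (mem_univ x)) (hφ.mono x (mem_univ x))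
      (fun v hv hhv => (hx v hv hhv).1) t
  · exact le_apply_mul_add_of_phiInv_le (hφ.zero x (mem_univ x)) (hψ.mono x (mem_univ x))
      (fun v hv hhv => (hx v hv hhv).2) t

lemma fracInvRel_iff {α : ℝ} :
    FracInvRel α φ ψ ↔ ∃ M : ℝ≥0, ∀ x, ∀ t : ℝ≥0, 0 < t →
      WithinFactor M (phiInv φ x t) ((t ^ (α / (n : ℝ)) : ℝ≥0) * phiInv ψ x t) := by
  constructor
  · rintro ⟨c₁, c₂, hc₁, h⟩
    have hc₁' : (c₁ : ℝ≥0∞) ≠ 0 := by exact_mod_cast hc₁.ne'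
    refine ⟨max c₁⁻¹ c₂, fun x t ht => ?_⟩
    rw [ENNReal.coe_rpow_of_ne_zero ht.ne']
    obtain ⟨h₁, h₂⟩ := h x t ht
    refine ⟨h₂.trans (by gcongr; exact le_max_right _ _), ?_⟩
    rw [ENNReal.mul_le_iff_le_inv hc₁' ENNReal.coe_ne_top, ← ENNReal.coe_inv hc₁.ne'] at h₁
    exact h₁.trans (by gcongr; exact le_max_left _ _)
  · rintro ⟨M, hM⟩
    have hM0 : M + 1 ≠ 0 := by positivity
    refine ⟨(M + 1)⁻¹, M + 1, by positivity, fun x t ht => ?_⟩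
    obtain ⟨h₁, h₂⟩ := (hM x t ht).mono (le_add_of_nonneg_right zero_le_one)
    rw [← ENNReal.coe_rpow_of_ne_zero ht.ne', ENNReal.coe_inv hM0,
      ENNReal.inv_mul_le_iff (by exact_mod_cast hM0) ENNReal.coe_ne_top]
    exact ⟨h₂, h₁⟩

end WeakEquivalence

section LimitAtInfinity

variable {n : ℕ} {φ : RSp n → ℝ≥0 → ℝ≥0∞} {C : ℝ≥0} {r s : ℝ}

lemma phiInv_le_mul_phiInv_four_mul {φi : ℝ≥0 → ℝ≥0∞} {x y : RSp n} {hx hy : ℝ≥0∞}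
    {β σ v : ℝ≥0} (hβ : 0 < β) (hv : 0 < v)
    (hφx : ∀ t : ℝ≥0, φi t ≤ σ → φ x (β * t) ≤ φi t + hx)
    (hφy : ∀ t : ℝ≥0, φ y t ≤ σ → φi (β * t) ≤ φ y t + hy)
    (hvσ : 2 * v ≤ σ) (hxv : hx ≤ v) (hyv : hy ≤ v) :
    phiInv φ y v ≤ (β⁻¹ * β⁻¹ : ℝ≥0) * phiInv φ x (4 * v : ℝ≥0) := by
  refine phiInv_le_mul_of_forall (by positivity) fun t ht => ?_
  by_contra! hlt
  have hvσ' : (2 * v : ℝ≥0∞) ≤ σ := by exact_mod_cast hvσ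
  have hyσ : φ y (β⁻¹ * β⁻¹ * t) ≤ σ :=
    calc φ y (β⁻¹ * β⁻¹ * t) ≤ v + v := hlt.le.trans le_self_add
      _ ≤ σ := by rwa [← two_mul]
  have hφi : φi (β⁻¹ * t) ≤ 2 * v :=
    calc φi (β⁻¹ * t) = φi (β * (β⁻¹ * β⁻¹ * t)) := by
          rw [← mul_assoc, ← mul_assoc, mul_inv_cancel₀ hβ.ne', one_mul]
      _ ≤ φ y (β⁻¹ * β⁻¹ * t) + hy := hφy _ hyσ
      _ ≤ v + v := by grw [hlt, hyv]
      _ = 2 * v := (two_mul _).symm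
  have h43 : ((4 * v : ℝ≥0) : ℝ≥0∞) ≤ (3 * v : ℝ≥0) :=
    calc ((4 * v : ℝ≥0) : ℝ≥0∞) ≤ φ x t := ht
      _ = φ x (β * (β⁻¹ * t)) := by rw [mul_inv_cancel_left₀ hβ.ne']
      _ ≤ φi (β⁻¹ * t) + hx := hφx _ (hφi.trans hvσ')
      _ ≤ 2 * v + v := by grw [hφi, hxv]
      _ = (3 * v : ℝ≥0) := by push_cast; ring
  have h34 : 3 * v < 4 * v := by gcongr; norm_num
  exact (ENNReal.coe_le_coe.1 h43).not_gt h34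

lemma HasGrowth.phiInv_le_of_asymptotic_comparison {φi : ℝ≥0 → ℝ≥0∞} {x y : RSp n}
    {hx hy : ℝ≥0∞} {β σ κ v : ℝ≥0} (hgrowth : HasGrowth C r s fun t : ℝ≥0 => phiInv φ y t)
    (hβ : 0 < β)
    (hφx : ∀ t : ℝ≥0, φi t ≤ σ → φ x (β * t) ≤ φi t + hx)
    (hφy : ∀ t : ℝ≥0, φ y t ≤ σ → φi (β * t) ≤ φ y t + hy)
    (hκ : 4 ≤ κ) (hκσ : 2 ≤ κ * σ) (hv : 0 < v) (hv1 : v ≤ 1) (hxv : κ * hx ≤ v)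
    (hyv : κ * hy ≤ v) :
    phiInv φ y v ≤ (C * κ ^ s * (β⁻¹ * β⁻¹) : ℝ≥0) * phiInv φ x v := by
  have hκ0 : 0 < κ := by positivity
  have hvκ : 0 < v / κ := by positivity
  have hdiv {c : ℝ≥0∞} (hc : κ * c ≤ v) : c ≤ (v / κ : ℝ≥0) := by
    rw [ENNReal.coe_div hκ0.ne', ENNReal.le_div_iff_mul_le (by simp [hκ0.ne']) (by simp)]
    rwa [mul_comm]
  have hvσ : 2 * (v / κ) ≤ σ := by
    rw [← mul_div_assoc, div_le_iff₀ hκ0, mul_comm σ]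
    exact (mul_le_of_le_one_right zero_le hv1).trans hκσ
  have h4v : 4 * (v / κ) ≤ v := by
    rw [← mul_div_assoc, div_le_iff₀ hκ0, mul_comm v]
    gcongr
  have hle : v / κ ≤ v := (le_mul_of_one_le_left zero_le (by norm_num)).trans h4v
  calc phiInv φ y v ≤ (C * κ ^ s : ℝ≥0) * phiInv φ y (v / κ : ℝ≥0) := by
        simpa only [div_div_cancel₀ hv.ne'] using hgrowth.upper hvκ hle
    _ ≤ (C * κ ^ s : ℝ≥0) * ((β⁻¹ * β⁻¹ : ℝ≥0) * phiInv φ x (4 * (v / κ) : ℝ≥0)) := by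
        grw [phiInv_le_mul_phiInv_four_mul hβ hvκ hφx hφy hvσ (hdiv hxv) (hdiv hyv)]
    _ ≤ (C * κ ^ s : ℝ≥0) * ((β⁻¹ * β⁻¹ : ℝ≥0) * phiInv φ x v) := by
        gcongr
        exact phiInv_mono (ENNReal.coe_le_coe.2 h4v)
    _ = (C * κ ^ s * (β⁻¹ * β⁻¹) : ℝ≥0) * phiInv φ x v := by
        rw [← mul_assoc, ← ENNReal.coe_mul]

lemma A2.exists_withinFactor_phiInv (ha2 : A2 φ)
    (hgrowth : ∀ x, HasGrowth C r s fun t : ℝ≥0 => phiInv φ x t) :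
    ∃ M : ℝ≥0, ∃ h : RSp n → ℝ≥0∞, ∫⁻ x, h x < ∞ ∧
      ∀ᵐ x, ∀ᵐ y, ∀ v : ℝ≥0, 0 < v → v ≤ 1 → h x ≤ v → h y ≤ v →
        WithinFactor M (phiInv φ x v) (phiInv φ y v) := by
  obtain ⟨φi, -, h, hh, -, β, hβ, -, σ, hσ, hae⟩ := ha2
  set κ : ℝ≥0 := max 4 (2 / σ)
  have hκ : 4 ≤ κ := le_max_left _ _
  have hκσ : 2 ≤ κ * σ := (div_le_iff₀ hσ).1 (le_max_right _ _)
  refine ⟨C * κ ^ s * (β⁻¹ * β⁻¹), fun x => κ * h x, ?_, ?_⟩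
  · rw [lintegral_const_mul' _ _ ENNReal.coe_ne_top]
    exact ENNReal.mul_lt_top ENNReal.coe_lt_top hh
  · filter_upwards [hae] with x hx
    filter_upwards [hae] with y hy v hv hv1 hxv hyv
    exact ⟨(hgrowth x).phiInv_le_of_asymptotic_comparison hβ (fun t => (hy t).1)
        (fun t => (hx t).2) hκ hκσ hv hv1 hyv hxv,
      (hgrowth y).phiInv_le_of_asymptotic_comparison hβ (fun t => (hx t).1)
        (fun t => (hy t).2) hκ hκσ hv hv1 hxv hyv⟩

lemma A0.exists_withinFactor_one (ha0 : A0 univ φ) :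
    ∃ M : ℝ≥0, ∀ᵐ x, WithinFactor M 1 (phiInv φ x 1) := by
  obtain ⟨β, hβ, -, hae⟩ := ha0
  rw [Measure.restrict_univ] at hae
  have hβ' : (β : ℝ≥0∞) ≠ 0 := by exact_mod_cast hβ.ne'
  refine ⟨β⁻¹, hae.mono fun x hx => ?_⟩
  rw [WithinFactor, ENNReal.coe_inv hβ.ne', mul_one,
    ← ENNReal.mul_le_iff_le_inv hβ' ENNReal.coe_ne_top, mul_one]
  exact hx

lemma neBot_ae_inf_comap_nhds_zero {X : Type*} [MeasurableSpace X] {μ : Measure X}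
    (hμ : μ univ = ∞) {h : X → ℝ≥0∞} (hh : ∫⁻ x, h x ∂μ ≠ ∞) :
    (ae μ ⊓ comap h (nhds 0)).NeBot := by
  rw [inf_comm, (ENNReal.nhds_zero_basis.comap h).inf_neBot_iff]
  intro ε hε S hS
  by_contra hempty
  have hge : ∀ᵐ x ∂μ, ε ≤ h x := by
    filter_upwards [hS] with x hxS
    by_contra! hlt
    exact hempty ⟨x, hlt, hxS⟩
  have hint := lintegral_mono_ae hge
  rw [lintegral_const, hμ, ENNReal.mul_top hε.ne', top_le_iff] at hint
  exact hh hint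

lemma volume_rSp_univ (hn : 0 < n) : (volume : Measure (RSp n)) univ = ∞ := by
  have : Nonempty (Fin n) := ⟨⟨0, hn⟩⟩
  have : NoncompactSpace (RSp n) := NormedSpace.noncompactSpace ℝ (RSp n)
  exact measure_univ_of_isAddLeftInvariant _

theorem exists_limit_phiInv (hn : 0 < n)
    (hgrowth : ∀ x, HasGrowth C r s fun t : ℝ≥0 => phiInv φ x t) (ha0 : A0 univ φ)
    (ha2 : A2 φ) :
    ∃ D, HasGrowth C r s D ∧ (∃ M : ℝ≥0, ∀ᵐ x, WithinFactor M (D 1) (phiInv φ x 1)) ∧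
      ∃ M : ℝ≥0, ∃ h : RSp n → ℝ≥0∞, ∫⁻ x, h x < ∞ ∧
        ∀ᵐ x, ∀ t : ℝ≥0, 0 < t → t ≤ 1 → h x ≤ t → WithinFactor M (phiInv φ x t) (D t) := by
  obtain ⟨M₀, hM₀⟩ := ha0.exists_withinFactor_one
  obtain ⟨M, h, hh, hM⟩ := ha2.exists_withinFactor_phiInv hgrowth
  -- `h y → 0` plays the role of `y → ∞`.
  have hF := neBot_ae_inf_comap_nhds_zero (volume_rSp_univ hn) hh.ne
  set F := ae volume ⊓ comap h (nhds 0)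
  have hone : ∀ᶠ y in F, WithinFactor M₀ 1 (phiInv φ y 1) := hM₀.filter_mono inf_le_left
  refine ⟨fun t => limsup (fun y => phiInv φ y t) F, .limsup hgrowth hone, ?_, M, h, hh, ?_⟩
  · exact ⟨M₀ * M₀, hM₀.mono fun x hx => (WithinFactor.limsup hone).symm.trans hx⟩
  · filter_upwards [hM] with x hx t ht ht1 hxt
    have hsmall : ∀ᶠ y in F, h y ≤ t :=
      ((eventually_le_nhds (by exact_mod_cast ht : (0 : ℝ≥0∞) < t)).comap h).filter_mono
        inf_le_right
    have hnear : ∀ᶠ y in F, WithinFactor M (phiInv φ x t) (phiInv φ y t) := by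
      filter_upwards [hx.filter_mono inf_le_left, hsmall] with y hy hyt
      exact hy t ht ht1 hxt hyt
    exact WithinFactor.limsup hnear

end LimitAtInfinity

section GlobalProfile

variable {n : ℕ} {φ ψ : RSp n → ℝ≥0 → ℝ≥0∞} {E : RSp n → ℝ≥0 → ℝ≥0∞} {α r s : ℝ}

/-- A regularized inverse of `φ` with growth indices `r ≤ s`: it is comparable with `φ⁻¹(x, t)`
up to weak equivalence, that is, for `t ≥ h x` with `h` integrable, and it satisfies the
`(A1)` estimate on cubes of every size. -/
structure IsGlobalProfile (φ : RSp n → ℝ≥0 → ℝ≥0∞) (r s : ℝ) (E : RSp n → ℝ≥0 → ℝ≥0∞) :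
    Prop where
  exists_hasGrowth : ∃ C : ℝ≥0, ∀ x, HasGrowth C r s (E x)
  aemeasurable : ∀ t : ℝ≥0, 0 < t → AEMeasurable (fun x => E x t) volume
  exists_withinFactor : ∃ M : ℝ≥0, ∃ h : RSp n → ℝ≥0∞, ∫⁻ x, h x < ∞ ∧
    ∀ᵐ x, ∀ t : ℝ≥0, 0 < t → h x ≤ t → WithinFactor M (phiInv φ x t) (E x t)
  exists_cube_le : ∃ C : ℝ≥0, ∀ Q : Cube n,
    ∀ᵐ x ∂(volume.restrict Q.set), ∀ᵐ y ∂(volume.restrict Q.set),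
      ∀ t : ℝ≥0, 0 < t → (t : ℝ≥0∞) ≤ (volume Q.set)⁻¹ → E x t ≤ C * E y t

lemma A1.exists_cube_le (ha1 : A1 φ) {D : ℝ≥0 → ℝ≥0∞}
    (hE : ∀ᵐ x, E x = glue D fun t : ℝ≥0 => phiInv φ x t) :
    ∃ C : ℝ≥0, ∀ Q : Cube n,
      ∀ᵐ x ∂(volume.restrict Q.set), ∀ᵐ y ∂(volume.restrict Q.set),
        ∀ t : ℝ≥0, (t : ℝ≥0∞) ≤ (volume Q.set)⁻¹ → E x t ≤ C * E y t := by
  obtain ⟨β, hβ0, hβ1, hβ⟩ := ha1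
  have hlarge : ∀ Q : Cube n, ∀ᵐ x ∂(volume.restrict Q.set), ∀ᵐ y ∂(volume.restrict Q.set),
      ∀ t : ℝ≥0, 1 ≤ t → (t : ℝ≥0∞) ≤ (volume Q.set)⁻¹ →
        phiInv φ x t ≤ (β⁻¹ : ℝ≥0) * phiInv φ y t := by
    intro Q
    by_cases hQ : volume Q.set ≤ 1
    · filter_upwards [hβ Q hQ] with x hx
      filter_upwards [hx] with y hy t ht htQ
      rw [ENNReal.coe_inv hβ0.ne', ← ENNReal.mul_le_iff_le_inv (by exact_mod_cast hβ0.ne')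
        ENNReal.coe_ne_top]
      exact hy t (by exact_mod_cast ht) htQ
    · refine .of_forall fun x => .of_forall fun y t ht htQ => absurd ?_ hQ
      exact ENNReal.one_le_inv.1 (le_trans (by exact_mod_cast ht) htQ)
  refine ⟨β⁻¹, fun Q => ?_⟩
  filter_upwards [hlarge Q, ae_restrict_of_ae hE] with x hx hEx
  filter_upwards [hx, ae_restrict_of_ae hE] with y hy hEy t htQ
  rw [hEx, hEy]
  rcases le_or_gt 1 t with ht | ht
  · simpa only [glue_of_one_le ht] using hy t ht htQ
  · rw [glue_of_lt_one ht, glue_of_lt_one ht]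
    exact le_mul_of_one_le_left zero_le (by exact_mod_cast (one_le_inv₀ hβ0).2 hβ1.le)

theorem exists_isGlobalProfile (hn : 0 < n) (hφ : IsWeakPhi univ φ) {C : ℝ≥0}
    (hgrowth : ∀ x, HasGrowth C r s fun t : ℝ≥0 => phiInv φ x t) (ha0 : A0 univ φ)
    (ha1 : A1 φ) (ha2 : A2 φ) : ∃ E, IsGlobalProfile φ r s E := by
  classical
  obtain ⟨D, hD, ⟨c, hc⟩, M, h, hh, hM⟩ := exists_limit_phiInv hn hgrowth ha0 ha2
  -- The growth bounds of a profile hold at every point, so the null set where gluing would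
  -- destroy them gets the limit itself.
  let E : RSp n → ℝ≥0 → ℝ≥0∞ := fun x =>
    if WithinFactor c (D 1) (phiInv φ x 1) then glue D fun t : ℝ≥0 => phiInv φ x t else D
  have hE : ∀ᵐ x, E x = glue D fun t : ℝ≥0 => phiInv φ x t := hc.mono fun x hx => if_pos hx
  refine ⟨E, ⟨max C (C * c * C), fun x => ?_⟩, fun t _ => ?_, ⟨max M 1, h, hh, ?_⟩, ?_⟩
  · by_cases hx : WithinFactor c (D 1) (phiInv φ x 1)
    · simpa only [E, if_pos hx] using hD.glue (hgrowth x) (by exact_mod_cast hx)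
    · simpa only [E, if_neg hx] using hD.mono_const (le_max_left _ _)
  · rcases le_or_gt 1 t with ht | ht
    · refine (hφ.aemeasurable_phiInv t).congr (hE.mono fun x hx => ?_)
      simp only [hx, glue_of_one_le ht]
    · refine (aemeasurable_const (b := D t)).congr (hE.mono fun x hx => ?_)
      simp only [hx, glue_of_lt_one ht]
  · filter_upwards [hM, hE] with x hx hEx t ht hxt
    rw [hEx]
    rcases le_or_gt 1 t with ht1 | ht1
    · rw [glue_of_one_le ht1]
      exact .refl (le_max_right _ _) _
    · rw [glue_of_lt_one ht1]
      exact (hx t ht ht1.le hxt).mono (le_max_left _ _)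
  · obtain ⟨K, hK⟩ := ha1.exists_cube_le hE
    exact ⟨K, fun Q => (hK Q).mono fun x hx => hx.mono fun y hy t _ htQ => hy t htQ⟩

namespace IsGlobalProfile

theorem of_fracInvRel (hE : IsGlobalProfile φ r s E) (hinv : FracInvRel α φ ψ) :
    IsGlobalProfile ψ (r - α / n) (s - α / n)
      fun x t => (t ^ (-(α / (n : ℝ))) : ℝ≥0) * E x t := by
  obtain ⟨C, hC⟩ := hE.exists_hasGrowth
  obtain ⟨M, h, hh, hM⟩ := hE.exists_withinFactor
  obtain ⟨K, hK⟩ := hE.exists_cube_le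
  obtain ⟨N, hN⟩ := fracInvRel_iff.1 hinv
  refine ⟨⟨C, fun x => by simpa only [sub_eq_add_neg] using (hC x).rpow_mul _⟩,
    fun t ht => (hE.aemeasurable t ht).const_mul _, ⟨N * M, h, hh, ?_⟩, ⟨K, fun Q => ?_⟩⟩
  · filter_upwards [hM] with x hx t ht hxt
    have hcancel : ((t ^ (-(α / (n : ℝ))) : ℝ≥0) : ℝ≥0∞) *
        ((t ^ (α / (n : ℝ)) : ℝ≥0) * phiInv ψ x t) = phiInv ψ x t := by
      rw [← mul_assoc, ← ENNReal.coe_mul, ← NNReal.rpow_add ht.ne', neg_add_cancel,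
        NNReal.rpow_zero, ENNReal.coe_one, one_mul]
    have hψ := ((hN x t ht).symm.trans (hx t ht hxt)).mul_left (t ^ (-(α / (n : ℝ))) : ℝ≥0)
    rwa [hcancel] at hψ
  · filter_upwards [hK Q] with x hx
    filter_upwards [hx] with y hy t ht htQ
    grw [hy t ht htQ]
    exact (mul_left_comm _ _ _).le

theorem exists_cube_phiInv_le (hE : IsGlobalProfile φ r s E) {g : RSp n → ℝ≥0 → ℝ≥0∞} {M : ℝ≥0}
    (hM : ∀ x, ∀ t : ℝ≥0, 0 < t → WithinFactor M (phiInv g x t) (E x t)) :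
    ∃ C : ℝ≥0, ∀ Q : Cube n,
      ∀ᵐ x ∂(volume.restrict Q.set), ∀ᵐ y ∂(volume.restrict Q.set),
        ∀ t : ℝ≥0∞, t ≤ (volume Q.set)⁻¹ → phiInv g x t ≤ C * phiInv g y t := by
  obtain ⟨K, hK⟩ := hE.exists_cube_le
  refine ⟨M * K * M, fun Q => ?_⟩
  rcases eq_or_ne (volume Q.set) 0 with hQ | hQ
  · simp [Measure.restrict_eq_zero.2 hQ]
  filter_upwards [hK Q] with x hx
  filter_upwards [hx] with y hy t htQ
  lift t to ℝ≥0 using ne_top_of_le_ne_top (ENNReal.inv_ne_top.2 hQ) htQ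
  rcases eq_or_ne t 0 with rfl | ht0
  · simp
  have ht : 0 < t := pos_iff_ne_zero.2 ht0
  calc phiInv g x t ≤ M * E x t := (hM x t ht).1
    _ ≤ M * (K * E y t) := by grw [hy t ht htQ]
    _ ≤ M * (K * (M * phiInv g y t)) := by grw [(hM y t ht).2]
    _ = (M * K * M : ℝ≥0) * phiInv g y t := by push_cast; ring

theorem exists_isStrongPhi (hE : IsGlobalProfile φ r s E) (hφ : IsWeakPhi univ φ) (hr : 0 < r)
    (hs : s ≤ 1) :
    ∃ g, IsStrongPhi univ g ∧ PhiWeakEquiv φ g ∧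
      ∃ M : ℝ≥0, ∀ x, ∀ t : ℝ≥0, 0 < t → WithinFactor M (phiInv g x t) (E x t) := by
  obtain ⟨C, hC⟩ := hE.exists_hasGrowth
  obtain ⟨M, h, hh, hM⟩ := hE.exists_withinFactor
  have hg := isStrongPhi_convexInverse hC hr hs hE.aemeasurable
  have hinv : ∀ x, ∀ t : ℝ≥0, 0 < t →
      WithinFactor (4 * C) (phiInv (fun x => convexInverse (E x)) x t) (E x t) :=
    fun x t ht => withinFactor_phiInv_convexInverse (hC x) hr.le hs ht
  refine ⟨_, hg, phiWeakEquiv_of_phiInv (M := M * (4 * C)) hφ hg.toIsWeakPhi hh ?_, _, hinv⟩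
  exact hM.mono fun x hx t ht hxt => (hx t ht hxt).trans (hinv x t ht).symm

end IsGlobalProfile

lemma fracInvRel_of_withinFactor {M N : ℝ≥0}
    (hφ : ∀ x, ∀ t : ℝ≥0, 0 < t → WithinFactor M (phiInv φ x t) (E x t))
    (hψ : ∀ x, ∀ t : ℝ≥0, 0 < t →
      WithinFactor N (phiInv ψ x t) ((t ^ (-(α / (n : ℝ))) : ℝ≥0) * E x t)) :
    FracInvRel α φ ψ := by
  refine fracInvRel_iff.2 ⟨M * N, fun x t ht => (hφ x t ht).trans ?_⟩
  have hcancel : ((t ^ (α / (n : ℝ)) : ℝ≥0) : ℝ≥0∞) *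
      ((t ^ (-(α / (n : ℝ))) : ℝ≥0) * E x t) = E x t := by
    rw [← mul_assoc, ← ENNReal.coe_mul, ← NNReal.rpow_add ht.ne', add_neg_cancel,
      NNReal.rpow_zero, ENNReal.coe_one, one_mul]
  have h := (hψ x t ht).symm.mul_left (t ^ (α / (n : ℝ)) : ℝ≥0)
  rwa [hcancel] at h

end GlobalProfile

theorem statement4_general {n : ℕ} (hn : 0 < n) (p α r : ℝ) (φ ψ : RSp n → ℝ≥0 → ℝ≥0∞)
    (hp : 1 ≤ p) (hr : 0 < r) (hα₁ : 1 / p - 1 ≤ α / (n : ℝ)) (hα₂ : α / (n : ℝ) < r)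
    (hφ : IsWeakPhi Set.univ φ) (hψ : IsWeakPhi Set.univ ψ) (hinv : FracInvRel α φ ψ)
    (ha0 : A0 Set.univ φ) (ha1 : A1 φ) (ha2 : A2 φ)
    (hainc : AInc p Set.univ φ) (hadec : ADec (1 / r) Set.univ φ) :
    ∃ φt ψt : RSp n → ℝ≥0 → ℝ≥0∞,
      IsStrongPhi Set.univ φt ∧ IsStrongPhi Set.univ ψt ∧
      PhiWeakEquiv φ φt ∧ PhiWeakEquiv ψ ψt ∧
      FracInvRel α φt ψt ∧
      ∃ C : ℝ≥0, ∀ Q : Cube n,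
        ∀ᵐ x ∂(volume.restrict Q.set), ∀ᵐ y ∂(volume.restrict Q.set),
          ∀ t : ℝ≥0∞, t ≤ (volume Q.set)⁻¹ →
            phiInv ψt x t ≤ (C : ℝ≥0∞) * phiInv ψt y t := by
  have hp0 : 0 < p := zero_lt_one.trans_le hp
  obtain ⟨C, hgrowth⟩ := exists_hasGrowth_phiInv hp0 (one_div_pos.2 hr) hφ hainc hadec
  rw [one_div_one_div] at hgrowth
  obtain ⟨E, hE⟩ := exists_isGlobalProfile hn hφ hgrowth ha0 ha1 ha2
  have hEψ := hE.of_fracInvRel hinv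
  obtain ⟨φt, hφt, hφφt, M, hM⟩ :=
    hE.exists_isStrongPhi hφ hr ((div_le_one hp0).2 hp)
  obtain ⟨ψt, hψt, hψψt, N, hN⟩ :=
    hEψ.exists_isStrongPhi hψ (by linarith) (by linarith)
  exact ⟨φt, ψt, hφt, hψt, hφφt, hψψt, fracInvRel_of_withinFactor hM hN,
    hEψ.exists_cube_phiInv_le hN⟩

/-- existence of regularized strong Φ-functions `φ̃, ψ̃` which are weakly
equivalent to `φ, ψ`, satisfy the fractional inverse relation, and for which the
`(A1)`-type estimate for `ψ̃` holds on cubes of arbitrary size for `t ∈ [0, 1/|Q|]`. -/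
theorem statement4 {n : ℕ} (hn : 0 < n) (p q α r : ℝ)
    (φ ψ : RSp n → ℝ≥0 → ℝ≥0∞)
    (hp : 1 < p) (hpq : p ≤ q) (hα : α / (n : ℝ) = 1 / p - 1 / q)
    (hφ : IsWeakPhi Set.univ φ) (hψ : IsWeakPhi Set.univ ψ)
    (hinv : FracInvRel α φ ψ)
    (hr₁ : α / (n : ℝ) < r) (hr₂ : r ≤ 1 / p)
    (ha0 : A0 Set.univ φ) (ha1 : A1 φ) (ha2 : A2 φ)
    (hainc : AInc p Set.univ φ) (hadec : ADec (1 / r) Set.univ φ) :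
    ∃ φt ψt : RSp n → ℝ≥0 → ℝ≥0∞,
      IsStrongPhi Set.univ φt ∧ IsStrongPhi Set.univ ψt ∧
      PhiWeakEquiv φ φt ∧ PhiWeakEquiv ψ ψt ∧
      FracInvRel α φt ψt ∧
      ∃ C : ℝ≥0, ∀ Q : Cube n,
        ∀ᵐ x ∂(volume.restrict Q.set), ∀ᵐ y ∂(volume.restrict Q.set),
          ∀ t : ℝ≥0∞, t ≤ (volume Q.set)⁻¹ →
            phiInv ψt x t ≤ (C : ℝ≥0∞) * phiInv ψt y t := by
  have hq : 0 ≤ 1 / p - 1 / q := sub_nonneg.2 (one_div_le_one_div_of_le (by linarith) hpq)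
  have hp' : 1 / p ≤ 1 := (div_le_one (by linarith)).2 hp.le
  exact statement4_general hn p α r φ ψ hp.le (by linarith) (by linarith) hr₁ hφ hψ hinv
    ha0 ha1 ha2 hainc hadec
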